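/- There is a constant C depending only on m and n such that: if P ∈ Γ̃₀, then there exists F ∈ C^m(ℝⁿ) with ‖F‖_{C^m(ℝⁿ)} ≤ C, F ≥ 0 everywhere on ℝⁿ, and J₀(F) = P. -/

import Mathlib

open scoped BigOperators

noncomputable section

abbrev Euc (n : ℕ) : Type := EuclideanSpace ℝ (Fin n)
abbrev MPoly (n : ℕ) : Type := MvPolynomial (Fin n) ℝ

/-- Partial derivative in the `i`-th coordinate direction. -/
noncomputable def pD {n : ℕ} (i : Fin n) (F : Euc n → ℝ) : Euc n → ℝ :=
  fun x => fderiv ℝ F x (EuclideanSpace.single i (1 : ℝ))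

/-- The multi-index partial derivative `∂^α F`. -/
noncomputable def mD {n : ℕ} (α : Fin n → ℕ) (F : Euc n → ℝ) : Euc n → ℝ :=
  (((List.finRange n).flatMap fun i => List.replicate (α i) i)).foldr pD F

/-- Partial derivative within a set. -/
noncomputable def pDW {n : ℕ} (s : Set (Euc n)) (i : Fin n) (F : Euc n → ℝ) : Euc n → ℝ :=
  fun x => fderivWithin ℝ F s x (EuclideanSpace.single i (1 : ℝ))

/-- Multi-index partial derivative within a set. -/
noncomputable def mDW {n : ℕ} (s : Set (Euc n)) (α : Fin n → ℕ) (F : Euc n → ℝ) : Euc n → ℝ :=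
  (((List.finRange n).flatMap fun i => List.replicate (α i) i)).foldr (pDW s) F

/-- The order `|α|` of a multi-index. -/
def deg {n : ℕ} (α : Fin n → ℕ) : ℕ := ∑ i, α i

/-- Evaluation of an `n`-variable polynomial at a point of `ℝⁿ`. -/
noncomputable def peval {n : ℕ} (P : MPoly n) (x : Euc n) : ℝ :=
  MvPolynomial.eval (fun i => x i) P

/-- `F ∈ C^m(ℝⁿ)` with `‖F‖_{C^m(ℝⁿ)} ≤ M`. -/
def CmNormLe (m n : ℕ) (F : Euc n → ℝ) (M : ℝ) : Prop :=
  ContDiff ℝ (m : ℕ∞) F ∧ ∀ α : Fin n → ℕ, deg α ≤ m → ∀ x : Euc n, |mD α F x| ≤ M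

/-- `F ∈ C^{m-1,1}(ℝⁿ)` with `‖F‖_{C^{m-1,1}(ℝⁿ)} ≤ M`. -/
def CmLipNormLe (m n : ℕ) (F : Euc n → ℝ) (M : ℝ) : Prop :=
  ContDiff ℝ ((m - 1 : ℕ) : ℕ∞) F ∧
  (∀ α : Fin n → ℕ, deg α ≤ m - 1 → ∀ x : Euc n, |mD α F x| ≤ M) ∧
  (∀ α : Fin n → ℕ, deg α = m - 1 → ∀ i : Fin n, ∀ x : Euc n, ∀ t : ℝ,
    |mD α F (x + t • EuclideanSpace.single i (1 : ℝ)) - mD α F x| ≤ M * |t|)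

/-- `J_x(F) = P`, i.e. `P` is the `(m-1)`-st order Taylor polynomial of `F` at `x`. -/
def IsJetAt (m n : ℕ) (F : Euc n → ℝ) (x : Euc n) (P : MPoly n) : Prop :=
  P.totalDegree ≤ m - 1 ∧
  ∀ α : Fin n → ℕ, deg α ≤ m - 1 → mD α (peval P) x = mD α F x

/-- `J_x^+(F) = P`, i.e. `P` is the `m`-th order Taylor polynomial of `F` at `x`. -/
def IsJetPlusAt (m n : ℕ) (F : Euc n → ℝ) (x : Euc n) (P : MPoly n) : Prop :=
  P.totalDegree ≤ m ∧
  ∀ α : Fin n → ℕ, deg α ≤ m → mD α (peval P) x = mD α F x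

/-- Truncation of a polynomial: keep the monomials of total degree `≤ d`. -/
noncomputable def truncLE {n : ℕ} (d : ℕ) (P : MPoly n) : MPoly n :=
  ∑ s ∈ P.support.filter (fun s => (s.sum fun _ e => e) ≤ d),
    MvPolynomial.monomial s (P.coeff s)

/-- Substitution `y ↦ y + v` in a polynomial. -/
noncomputable def polyShift {n : ℕ} (v : Fin n → ℝ) (P : MPoly n) : MPoly n :=
  MvPolynomial.aeval (fun i => (MvPolynomial.X i + MvPolynomial.C (v i) : MPoly n)) P

/-- The `(m-1)`-st order Taylor polynomial of a polynomial `P` at `x`. -/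
noncomputable def jetTrunc (m n : ℕ) (x : Euc n) (P : MPoly n) : MPoly n :=
  polyShift (fun i => -(x i)) (truncLE (m - 1) (polyShift (fun i => x i) P))

/-- Multiplication of `(m-1)`-jets at `x`: `P ⊙_x Q = J_x(PQ)`. -/
noncomputable def jmul (m n : ℕ) (x : Euc n) (P Q : MPoly n) : MPoly n :=
  jetTrunc m n x (P * Q)

/-- `Γ*(x,M)`. -/
def GammaStar (m n : ℕ) (x : Euc n) (M : ℝ) : Set (MPoly n) :=
  {P | ∃ F : Euc n → ℝ, CmNormLe m n F M ∧ (∀ y, 0 ≤ F y) ∧ IsJetAt m n F x P}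

/-- `Γ_f(x,M)`. -/
def GammaF (m n : ℕ) (f : Euc n → ℝ) (x : Euc n) (M : ℝ) : Set (MPoly n) :=
  {P ∈ GammaStar m n x M | peval P x = f x}

/-- `Γ'*(x,M)` (the `C^{m-1,1}` version). -/
def GammaStar' (m n : ℕ) (x : Euc n) (M : ℝ) : Set (MPoly n) :=
  {P | ∃ F : Euc n → ℝ, CmLipNormLe m n F M ∧ (∀ y, 0 ≤ F y) ∧ IsJetAt m n F x P}

/-- `Γ'_f(x,M)`. -/
def GammaF' (m n : ℕ) (f : Euc n → ℝ) (x : Euc n) (M : ℝ) : Set (MPoly n) :=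
  {P ∈ GammaStar' m n x M | peval P x = f x}

/-- `Γ₀⁺`. -/
def Gamma0plus (m n : ℕ) : Set (MPoly n) :=
  {P | P.totalDegree ≤ m ∧
    (∀ β : Fin n → ℕ, deg β ≤ m → |mD β (peval P) 0| ≤ 1) ∧
    (∀ x : Euc n, 0 ≤ peval P x + ‖x‖ ^ m) ∧
    (∀ ε : ℝ, 0 < ε → ∃ δ : ℝ, 0 < δ ∧ ∀ x : Euc n, ‖x‖ ≤ δ → 0 ≤ peval P x + ε * ‖x‖ ^ m)}

/-- `Γ̃₀'`. -/
def GammaTilde0' (m n : ℕ) : Set (MPoly n) :=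
  {P | P.totalDegree ≤ m - 1 ∧
    (∀ β : Fin n → ℕ, deg β ≤ m - 1 → |mD β (peval P) 0| ≤ 1) ∧
    ∀ x : Euc n, 0 ≤ peval P x + ‖x‖ ^ m}

/-- The closed axis-parallel cube with center `c` and sidelength `δ`. -/
def cube {n : ℕ} (c : Euc n) (δ : ℝ) : Set (Euc n) :=
  {y | ∀ i, |y i - c i| ≤ δ / 2}

/-- `F ∈ C^{m-1,1}(Q)` with `‖F‖_{C^{m-1,1}(Q)} ≤ M`, for the cube `Q` of center `c`,
sidelength `δ`. -/
def CmLipOnCubeLe (m n : ℕ) (c : Euc n) (δ : ℝ) (F : Euc n → ℝ) (M : ℝ) : Prop :=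
  ContDiffOn ℝ ((m - 1 : ℕ) : ℕ∞) F (cube c δ) ∧
  (∀ α : Fin n → ℕ, deg α ≤ m - 1 → ∀ x ∈ cube c δ, |mDW (cube c δ) α F x| ≤ M) ∧
  (∀ α : Fin n → ℕ, deg α = m - 1 → ∀ i : Fin n, ∀ x ∈ cube c δ, ∀ t : ℝ,
    x + t • EuclideanSpace.single i (1 : ℝ) ∈ cube c δ →
    |mDW (cube c δ) α F (x + t • EuclideanSpace.single i (1 : ℝ)) - mDW (cube c δ) α F x|
      ≤ M * |t|)

/-!
Let `P ∈ Γ₀⁺` and let `χ` be a bump function at the origin. The extension is `F = χ P + h`, where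
`h ≥ 0` compensates for the negative values of `P` near the origin without contributing to the
`m`-jet there.

The function `N x = χ x * ‖x‖ ^ m` would do for the global bound `P ≥ -‖x‖ ^ m`, but it is not `C^m`
at the origin. However, its derivatives of order at most `m` are bounded off the origin, by
homogeneity, and this bound is preserved by the rescaling `N ↦ s ^ m * N (· / s)` with `s ≤ 1`. The
difference `N - s ^ m * N (· / s)` vanishes near the origin, agrees with `N` where `‖x‖` is at least
a fixed multiple of `s`, and has a `C^m` norm bounded independently of `s`.

Since `P ≥ -ε ‖x‖ ^ m` near the origin for every `ε > 0`, scales `s k` can be chosen such that at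
every `x ≠ 0` some term of `h = ∑ 2 ^ (-k) (N - (s k) ^ m * N (· / s k))` dominates `-χ P`. The
geometric weights make `h` a `C^m` function, whose derivatives at the origin vanish termwise.
-/

section IteratedDerivatives

open scoped Topology

variable {V W : Type*} [NormedAddCommGroup V] [NormedSpace ℝ V]
  [NormedAddCommGroup W] [NormedSpace ℝ W]

/-- `f` is of class `C^m` and its Fréchet derivatives of order at most `m` are bounded by `M`: the
coordinate-free counterpart of `CmNormLe`. -/
def HasCmBound (m : ℕ) (M : ℝ) (f : V → W) : Prop :=
  ContDiff ℝ m f ∧ ∀ k ≤ m, ∀ x, ‖iteratedFDeriv ℝ k f x‖ ≤ M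

namespace HasCmBound

variable {m : ℕ} {M N : ℝ} {f g : V → W}

lemma nonneg (hf : HasCmBound m M f) : 0 ≤ M :=
  (norm_nonneg _).trans (hf.2 0 m.zero_le 0)

lemma contDiffAt (hf : HasCmBound m M f) {k : ℕ} (hk : k ≤ m) (x : V) : ContDiffAt ℝ k f x :=
  (hf.1.of_le (by exact_mod_cast hk)).contDiffAt

lemma mono (hf : HasCmBound m M f) (hMN : M ≤ N) : HasCmBound m N f :=
  ⟨hf.1, fun k hk x => (hf.2 k hk x).trans hMN⟩

lemma add (hf : HasCmBound m M f) (hg : HasCmBound m N g) :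
    HasCmBound m (M + N) fun x => f x + g x := by
  refine ⟨hf.1.add hg.1, fun k hk x => ?_⟩
  rw [fun_iteratedFDeriv_add_apply (hf.contDiffAt hk x) (hg.contDiffAt hk x)]
  exact norm_add_le_of_le (hf.2 k hk x) (hg.2 k hk x)

lemma const_smul (hf : HasCmBound m M f) (c : ℝ) : HasCmBound m (|c| * M) fun x => c • f x := by
  refine ⟨hf.1.const_smul c, fun k hk x => ?_⟩
  rw [iteratedFDeriv_const_smul_apply' (hf.contDiffAt hk x), norm_smul, Real.norm_eq_abs]
  exact mul_le_mul_of_nonneg_left (hf.2 k hk x) (abs_nonneg c)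

variable {ι : Type*} {u : ι → ℝ} {F : ι → V → W}

lemma sum {S : Finset ι} (hF : ∀ i ∈ S, HasCmBound m (u i) (F i)) :
    HasCmBound m (∑ i ∈ S, u i) fun x => ∑ i ∈ S, F i x := by
  refine ⟨ContDiff.sum fun i hi => (hF i hi).1, fun k hk x => ?_⟩
  rw [iteratedFDeriv_fun_sum_apply fun i hi => (hF i hi).contDiffAt hk x]
  exact norm_sum_le_of_le S fun i hi => (hF i hi).2 k hk x

variable [CompleteSpace W]

lemma iteratedFDeriv_tsum (hF : ∀ i, HasCmBound m (u i) (F i)) (hu : Summable u) {k : ℕ}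
    (hk : k ≤ m) (x : V) :
    iteratedFDeriv ℝ k (fun y => ∑' i, F i y) x = ∑' i, iteratedFDeriv ℝ k (F i) x :=
  congrFun (_root_.iteratedFDeriv_tsum (N := m) (v := fun _ => u) (fun i => (hF i).1)
    (fun _ _ => hu) (fun j i y hj => (hF i).2 j (by exact_mod_cast hj) y)
    (by exact_mod_cast hk)) x

lemma tsum (hF : ∀ i, HasCmBound m (u i) (F i)) (hu : Summable u) :
    HasCmBound m (∑' i, u i) fun x => ∑' i, F i x := by
  refine ⟨contDiff_tsum (N := m) (v := fun _ => u) (fun i => (hF i).1) (fun _ _ => hu)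
    fun k i x hk => (hF i).2 k (by exact_mod_cast hk) x, fun k hk x => ?_⟩
  rw [iteratedFDeriv_tsum hF hu hk]
  exact tsum_of_norm_bounded hu.hasSum fun i => (hF i).2 k hk x

end HasCmBound

lemma exists_forall_le_of_forall_exists_le {ι : Type*} {m : ℕ} {a : ℕ → ι → ℝ}
    (h : ∀ k ≤ m, ∃ K, ∀ i, a k i ≤ K) : ∃ K, ∀ k ≤ m, ∀ i, a k i ≤ K := by
  choose! K hK using h
  obtain ⟨M, hM⟩ := ((Finset.range (m + 1)).image K).exists_le
  refine ⟨M, fun k hk i => (hK k hk i).trans (hM _ (Finset.mem_image_of_mem K ?_))⟩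
  exact Finset.mem_range.2 (Nat.lt_succ_of_le hk)

lemma exists_hasCmBound_of_hasCompactSupport {m : ℕ} {f : V → W} (hf : HasCompactSupport f)
    (hf' : ContDiff ℝ m f) : ∃ M, HasCmBound m M f := by
  obtain ⟨M, hM⟩ := exists_forall_le_of_forall_exists_le
    (a := fun k x => ‖iteratedFDeriv ℝ k f x‖) (m := m) fun k hk =>
      (hf'.continuous_iteratedFDeriv (by exact_mod_cast hk)).bounded_above_of_compact_support
        (hf.iteratedFDeriv (𝕜 := ℝ) k)
  exact ⟨M, hf', hM⟩

lemma continuousOn_iteratedFDeriv_of_isOpen {m k : ℕ} {f : V → W} {s : Set V}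
    (hf : ContDiffOn ℝ m f s) (hs : IsOpen s) (hk : k ≤ m) :
    ContinuousOn (iteratedFDeriv ℝ k f) s :=
  (hf.continuousOn_iteratedFDerivWithin (by exact_mod_cast hk) hs.uniqueDiffOn).congr
    fun _ hx => (iteratedFDerivWithin_of_isOpen k hs hx).symm

lemma iteratedFDeriv_comp_smul_of_ne_zero {c : ℝ} (hc : c ≠ 0) (f : V → W) (k : ℕ) (x : V) :
    iteratedFDeriv ℝ k (fun y => f (c • y)) x = c ^ k • iteratedFDeriv ℝ k f (c • x) := by
  let e : V ≃L[ℝ] V := ContinuousLinearEquiv.smulLeft (Units.mk0 c hc)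
  have h := e.iteratedFDerivWithin_comp_right f uniqueDiffOn_univ (Set.mem_univ (e x)) k
  simp only [Set.preimage_univ, iteratedFDerivWithin_univ] at h
  refine h.trans (ContinuousMultilinearMap.ext fun v =>
    ((iteratedFDeriv ℝ k f (c • x)).map_smul_univ (fun _ => c) v).trans ?_)
  rw [Finset.prod_const, Finset.card_univ, Fintype.card_fin, smul_apply]

lemma exists_norm_iteratedFDeriv_le_of_homogeneous [ProperSpace V] {f : V → W} {m k : ℕ}
    (hf : ContDiffOn ℝ m f {0}ᶜ) (hhom : ∀ t : ℝ, 0 < t → ∀ x, f (t • x) = t ^ m • f x)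
    (hk : k ≤ m) : ∃ K, 0 ≤ K ∧ ∀ x ≠ 0, ‖iteratedFDeriv ℝ k f x‖ ≤ K * ‖x‖ ^ (m - k) := by
  have hsphere : Metric.sphere (0 : V) 1 ⊆ {0}ᶜ := fun x hx =>
    ne_zero_of_mem_sphere one_ne_zero ⟨x, hx⟩
  obtain ⟨K, hK⟩ := (isCompact_sphere (0 : V) 1).exists_bound_of_continuousOn
    ((continuousOn_iteratedFDeriv_of_isOpen hf isOpen_compl_singleton hk).mono hsphere)
  refine ⟨max K 0, le_max_right _ _, fun x hx => ?_⟩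
  have hpos : 0 < ‖x‖ := norm_pos_iff.2 hx
  set w := ‖x‖⁻¹ • x with hw
  have hw_mem : w ∈ Metric.sphere (0 : V) 1 := by simp [hw, norm_smul, hpos.ne']
  have hxw : ‖x‖ • w = x := by rw [hw, smul_inv_smul₀ hpos.ne']
  have hfw : ContDiffAt ℝ k f w := ((hf.of_le (by exact_mod_cast hk)).contDiffAt
    (isOpen_compl_singleton.mem_nhds (hsphere hw_mem)))
  have hscale : ‖x‖ ^ k • iteratedFDeriv ℝ k f x = ‖x‖ ^ m • iteratedFDeriv ℝ k f w := by
    rw [← iteratedFDeriv_const_smul_apply' hfw, ← funext (hhom ‖x‖ hpos),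
      iteratedFDeriv_comp_smul_of_ne_zero hpos.ne', hxw]
  have hfx : iteratedFDeriv ℝ k f x = ‖x‖ ^ (m - k) • iteratedFDeriv ℝ k f w := by
    rw [← smul_right_inj (pow_ne_zero k hpos.ne'), hscale, smul_smul, ← pow_add,
      Nat.add_sub_cancel' hk]
  rw [hfx, norm_smul, norm_pow, norm_norm, mul_comm]
  gcongr
  exact (hK w hw_mem).trans (le_max_left _ _)

lemma exists_norm_iteratedFDeriv_bump_smul_le_of_homogeneous [FiniteDimensional ℝ V]
    [HasContDiffBump V] (χ : ContDiffBump (0 : V)) {f : V → W} {m : ℕ}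
    (hf : ContDiffOn ℝ m f {0}ᶜ) (hhom : ∀ t : ℝ, 0 < t → ∀ x, f (t • x) = t ^ m • f x) :
    ∃ K, ∀ k ≤ m, ∀ x ≠ 0, ‖iteratedFDeriv ℝ k (fun y => χ y • f y) x‖ ≤ K := by
  have : ProperSpace V := FiniteDimensional.proper ℝ V
  have hχf : ContDiffOn ℝ m (fun y => χ y • f y) {0}ᶜ := χ.contDiff.contDiffOn.smul hf
  let A : Set V := Metric.closedBall 0 χ.rOut \ Metric.ball 0 χ.rIn
  have hA : IsCompact A := (isCompact_closedBall 0 χ.rOut).diff Metric.isOpen_ball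
  have hA0 : A ⊆ {0}ᶜ := fun x hx h0 =>
    hx.2 (by simpa only [Set.mem_singleton_iff.1 h0] using Metric.mem_ball_self χ.rIn_pos)
  suffices ∀ k ≤ m, ∃ K, ∀ x : {x : V // x ≠ 0}, ‖iteratedFDeriv ℝ k (fun y => χ y • f y) x‖ ≤ K by
    simpa only [Subtype.forall] using exists_forall_le_of_forall_exists_le this
  intro k hk
  obtain ⟨K₁, hK₁, hin⟩ := exists_norm_iteratedFDeriv_le_of_homogeneous hf hhom hk
  obtain ⟨K₂, hmid⟩ := hA.exists_bound_of_continuousOn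
    ((continuousOn_iteratedFDeriv_of_isOpen hχf isOpen_compl_singleton hk).mono hA0)
  refine ⟨max (K₁ * χ.rIn ^ (m - k)) K₂, fun ⟨x, hx⟩ => ?_⟩
  by_cases hxin : x ∈ Metric.ball 0 χ.rIn
  · have hχ : (fun y => χ y • f y) =ᶠ[𝓝 x] f := by
      filter_upwards [χ.eventuallyEq_one_of_mem_ball hxin] with y hy
      rw [hy, Pi.one_apply, one_smul]
    rw [(hχ.iteratedFDeriv ℝ k).eq_of_nhds]
    refine (hin x hx).trans (le_max_of_le_left ?_)
    gcongr
    exact (mem_ball_zero_iff.1 hxin).le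
  by_cases hxout : x ∈ Metric.closedBall 0 χ.rOut
  · exact (hmid x ⟨hxout, hxin⟩).trans (le_max_right _ _)
  · have hx_supp : x ∉ tsupport fun y => χ y • f y := fun h =>
      hxout (χ.tsupport_eq ▸ tsupport_smul_subset_left χ f h)
    have hzero : iteratedFDeriv ℝ k (fun y => χ y • f y) x = 0 :=
      Function.notMem_support.1 fun h => hx_supp (support_iteratedFDeriv_subset k h)
    rw [hzero, norm_zero]
    exact le_max_of_le_left (mul_nonneg hK₁ (pow_nonneg χ.rIn_pos.le _))

end IteratedDerivatives

section Shell

open scoped Topology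

variable {V : Type*} [NormedAddCommGroup V] [InnerProductSpace ℝ V] [FiniteDimensional ℝ V]
  (χ : ContDiffBump (0 : V)) (m : ℕ) {s : ℝ}

/-- The function `‖x‖ ^ m` localised to the shell `s * χ.rIn ≤ ‖x‖ ≤ χ.rOut` by means of the bump
`χ`. For `s * χ.rOut ≤ ‖x‖` it equals `χ x * ‖x‖ ^ m`, while its `C^m` norm does not depend on the
inner scale `s`. -/
def shell (s : ℝ) (x : V) : ℝ := (χ x - χ (s⁻¹ • x)) * ‖x‖ ^ m

variable {χ m}

lemma bump_inv_smul_eq_zero (hs : 0 < s) {x : V} (hx : s * χ.rOut ≤ ‖x‖) : χ (s⁻¹ • x) = 0 := by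
  refine χ.zero_of_le_dist ?_
  rwa [dist_zero_right, norm_smul, norm_inv, Real.norm_of_nonneg hs.le, le_inv_mul_iff₀ hs]

lemma shell_of_le (hs : 0 < s) {x : V} (hx : s * χ.rOut ≤ ‖x‖) :
    shell χ m s x = χ x * ‖x‖ ^ m := by
  rw [shell, bump_inv_smul_eq_zero hs hx, sub_zero]

lemma shell_nonneg (hs : 0 < s) (hsχ : s * χ.rOut ≤ χ.rIn) (x : V) : 0 ≤ shell χ m s x := by
  refine mul_nonneg (sub_nonneg.2 ?_) (pow_nonneg (norm_nonneg x) m)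
  rcases le_total ‖x‖ χ.rIn with hx | hx
  · rw [χ.one_of_mem_closedBall (mem_closedBall_zero_iff.2 hx)]
    exact χ.le_one
  · rw [bump_inv_smul_eq_zero hs (hsχ.trans hx)]
    exact χ.nonneg

variable (χ m)

lemma shell_eventuallyEq_zero (s : ℝ) : shell χ m s =ᶠ[𝓝 0] 0 := by
  have hχs : ∀ᶠ x : V in 𝓝 0, χ (s⁻¹ • x) = 1 := by
    have hcont : Filter.Tendsto (fun x : V => s⁻¹ • x) (𝓝 0) (𝓝 0) := by
      simpa only [smul_zero] using ((continuous_const_smul s⁻¹).tendsto (0 : V))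
    exact hcont.eventually χ.eventuallyEq_one
  filter_upwards [χ.eventuallyEq_one, hχs] with x hx hxs
  rw [shell, hx, hxs, Pi.one_apply, sub_self, zero_mul, Pi.zero_apply]

lemma iteratedFDeriv_shell_zero (s : ℝ) (k : ℕ) : iteratedFDeriv ℝ k (shell χ m s) 0 = 0 := by
  rw [((shell_eventuallyEq_zero χ m s).iteratedFDeriv ℝ k).eq_of_nhds]
  exact congrFun iteratedFDeriv_fun_zero 0

lemma contDiff_shell (s : ℝ) {N : ℕ∞} : ContDiff ℝ N (shell χ m s) := by
  refine contDiff_iff_contDiffAt.2 fun x => ?_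
  by_cases hx : x = 0
  · subst hx
    exact contDiffAt_const.congr_of_eventuallyEq (shell_eventuallyEq_zero χ m s)
  · have hχs : ContDiff ℝ N fun y => χ (s⁻¹ • y) := χ.contDiff.comp (contDiff_const_smul s⁻¹)
    exact (χ.contDiffAt.sub hχs.contDiffAt).mul ((contDiffAt_norm ℝ hx).pow m)

lemma shell_eq_sub_rescaled (hs : s ≠ 0) :
    shell χ m s = fun x => χ x • ‖x‖ ^ m - |s| ^ m • χ (s⁻¹ • x) • ‖s⁻¹ • x‖ ^ m := by
  funext x
  have hscale : |s| ^ m * ‖s⁻¹ • x‖ ^ m = ‖x‖ ^ m := by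
    rw [← mul_pow, norm_smul, norm_inv, Real.norm_eq_abs, mul_inv_cancel_left₀ (abs_ne_zero.2 hs)]
  simp only [smul_eq_mul]
  rw [mul_left_comm, hscale, shell, sub_mul]

lemma contDiffAt_bump_smul_norm_pow {N : ℕ∞} {x : V} (hx : x ≠ 0) :
    ContDiffAt ℝ N (fun y => χ y • ‖y‖ ^ m) x :=
  χ.contDiffAt.smul ((contDiffAt_norm ℝ hx).pow m)

lemma iteratedFDeriv_shell (hs : 0 < s) (k : ℕ) {x : V} (hx : x ≠ 0) :
    iteratedFDeriv ℝ k (shell χ m s) x = iteratedFDeriv ℝ k (fun y => χ y • ‖y‖ ^ m) x -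
      (s ^ m * s⁻¹ ^ k) • iteratedFDeriv ℝ k (fun y => χ y • ‖y‖ ^ m) (s⁻¹ • x) := by
  have hsx : s⁻¹ • x ≠ 0 := smul_ne_zero (inv_ne_zero hs.ne') hx
  set N : V → ℝ := fun y => χ y • ‖y‖ ^ m
  have hN : ContDiffAt ℝ k N x := contDiffAt_bump_smul_norm_pow χ m hx
  have hNs : ContDiffAt ℝ k (fun y => N (s⁻¹ • y)) x :=
    ContDiffAt.comp (g := N) x (contDiffAt_bump_smul_norm_pow χ m hsx)
      (contDiff_const_smul s⁻¹).contDiffAt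
  rw [shell_eq_sub_rescaled χ m hs.ne', abs_of_pos hs,
    fun_iteratedFDeriv_sub_apply hN (hNs.const_smul (s ^ m)),
    iteratedFDeriv_const_smul_apply' hNs,
    iteratedFDeriv_comp_smul_of_ne_zero (inv_ne_zero hs.ne'), smul_smul]

lemma exists_hasCmBound_shell :
    ∃ K, ∀ s, 0 < s → s ≤ 1 → HasCmBound m K (shell χ m s) := by
  have hnorm : ContDiffOn ℝ m (fun x : V => ‖x‖ ^ m) {0}ᶜ := fun x hx =>
    ((contDiffAt_norm ℝ hx).pow m).contDiffWithinAt
  obtain ⟨K, hK⟩ := exists_norm_iteratedFDeriv_bump_smul_le_of_homogeneous χ hnorm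
    fun t ht x => by rw [norm_smul, Real.norm_of_nonneg ht.le, mul_pow, smul_eq_mul]
  refine ⟨max 0 (K + K), fun s hs hs1 => ⟨contDiff_shell χ m s, fun k hk x => ?_⟩⟩
  by_cases hx : x = 0
  · rw [hx, iteratedFDeriv_shell_zero, norm_zero]
    exact le_max_left _ _
  have hsx : s⁻¹ • x ≠ 0 := smul_ne_zero (inv_ne_zero hs.ne') hx
  have hfactor : s ^ m * s⁻¹ ^ k ≤ 1 := by
    rw [inv_pow, ← div_eq_mul_inv, div_le_one (pow_pos hs k)]
    exact pow_le_pow_of_le_one hs.le hs1 hk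
  rw [iteratedFDeriv_shell χ m hs k hx]
  refine (norm_sub_le_of_le (hK k hk x hx) ?_).trans (le_max_right _ _)
  rw [norm_smul, Real.norm_of_nonneg (by positivity)]
  exact (mul_le_of_le_one_left (norm_nonneg _) hfactor).trans (hK k hk _ hsx)

variable {χ m}

lemma shell_le_norm_pow (s : ℝ) (x : V) : shell χ m s x ≤ ‖x‖ ^ m :=
  mul_le_of_le_one_left (by positivity) ((sub_le_self _ χ.nonneg).trans χ.le_one)

variable (χ m)

/-- The geometrically weighted superposition of the shells of inner scales `s k`. With
`s` decreasing fast enough it dominates near the origin any prescribed function that is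
`o(‖x‖ ^ m)`, while all its derivatives of order at most `m` vanish at the origin. -/
def shellSum (s : ℕ → ℝ) (x : V) : ℝ := ∑' k, (1 / 2 : ℝ) ^ k • shell χ m (s k) x

lemma exists_hasCmBound_shellSum :
    ∃ K, ∀ s : ℕ → ℝ, (∀ k, 0 < s k) → (∀ k, s k ≤ 1) → HasCmBound m K (shellSum χ m s) ∧
      ∀ j ≤ m, iteratedFDeriv ℝ j (shellSum χ m s) 0 = 0 := by
  obtain ⟨K, hK⟩ := exists_hasCmBound_shell χ m
  refine ⟨∑' k : ℕ, |(1 / 2 : ℝ) ^ k| * K, fun s hs hs1 => ?_⟩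
  have hterm : ∀ k, HasCmBound m (|(1 / 2 : ℝ) ^ k| * K)
      fun x => (1 / 2 : ℝ) ^ k • shell χ m (s k) x := fun k =>
    (hK (s k) (hs k) (hs1 k)).const_smul _
  have hsum : Summable fun k : ℕ => |(1 / 2 : ℝ) ^ k| * K :=
    summable_geometric_two.abs.mul_right K
  refine ⟨.tsum hterm hsum, fun j hj => ?_⟩
  have hzero : ∀ k, iteratedFDeriv ℝ j (fun x => (1 / 2 : ℝ) ^ k • shell χ m (s k) x) 0 = 0 :=
    fun k => by
      rw [iteratedFDeriv_const_smul_apply' (contDiff_shell χ m (s k)).contDiffAt,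
        iteratedFDeriv_shell_zero, smul_zero]
  exact (HasCmBound.iteratedFDeriv_tsum hterm hsum hj 0).trans
    ((tsum_congr hzero).trans tsum_zero)

variable {χ m}

lemma shellSum_nonneg {s : ℕ → ℝ} (hs : ∀ k, 0 < s k) (hsχ : ∀ k, s k * χ.rOut ≤ χ.rIn) (x : V) :
    0 ≤ shellSum χ m s x :=
  tsum_nonneg fun k => smul_nonneg (by positivity) (shell_nonneg (hs k) (hsχ k) x)

lemma smul_shell_le_shellSum {s : ℕ → ℝ} (hs : ∀ k, 0 < s k)
    (hsχ : ∀ k, s k * χ.rOut ≤ χ.rIn) (k : ℕ) (x : V) :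
    (1 / 2 : ℝ) ^ k • shell χ m (s k) x ≤ shellSum χ m s x := by
  have hterm : ∀ j, 0 ≤ (1 / 2 : ℝ) ^ j • shell χ m (s j) x := fun j =>
    smul_nonneg (by positivity) (shell_nonneg (hs j) (hsχ j) x)
  have hsum : Summable fun j => (1 / 2 : ℝ) ^ j • shell χ m (s j) x :=
    (summable_geometric_two.mul_right (‖x‖ ^ m)).of_nonneg_of_le hterm fun j =>
      smul_le_smul_of_nonneg_left (shell_le_norm_pow (s j) x) (by positivity)
  exact hsum.le_tsum k fun j _ => hterm j

end Shell

section Majorant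

variable {V : Type*} [NormedAddCommGroup V] {m : ℕ} {p : V → ℝ}

lemma nonneg_at_zero_of_locally_nonneg_add_eps
    (hloc : ∀ ε > 0, ∃ δ > 0, ∀ x, ‖x‖ ≤ δ → 0 ≤ p x + ε * ‖x‖ ^ m) : 0 ≤ p 0 := by
  refine le_of_forall_pos_le_add fun ε hε => ?_
  obtain ⟨δ, hδ, hp⟩ := hloc ε hε
  refine (hp 0 (norm_zero.trans_le hδ.le)).trans (add_le_add_right ?_ _)
  exact mul_le_of_le_one_right hε.le (pow_le_one₀ (norm_nonneg _) (norm_zero.trans_le zero_le_one))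

lemma exists_scales (hglob : ∀ x, 0 ≤ p x + ‖x‖ ^ m)
    (hloc : ∀ ε > 0, ∃ δ > 0, ∀ x, ‖x‖ ≤ δ → 0 ≤ p x + ε * ‖x‖ ^ m) {r₀ : ℝ} (hr₀ : 0 < r₀) :
    ∃ r : ℕ → ℝ, (∀ k, 0 < r k) ∧ (∀ k, r k ≤ r₀) ∧
      ∀ x ≠ 0, ∃ k, r k ≤ ‖x‖ ∧ 0 ≤ p x + (1 / 2) ^ k * ‖x‖ ^ m := by
  have hgeom : ∀ k : ℕ, (0 : ℝ) < (1 / 2) ^ (k + 1) := fun k => by positivity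
  choose δ hδ hp using fun k => hloc _ (hgeom k)
  let r : ℕ → ℝ := fun k => min (δ k) (r₀ / (k + 1))
  have hr_tendsto : ∀ x : V, x ≠ 0 → ∃ k, r k ≤ ‖x‖ := fun x hx => by
    obtain ⟨k, hk⟩ := exists_nat_one_div_lt (div_pos (norm_pos_iff.2 hx) hr₀)
    refine ⟨k, (min_le_right _ _).trans ?_⟩
    rw [lt_div_iff₀ hr₀, one_div_mul_eq_div] at hk
    exact hk.le
  refine ⟨r, fun k => lt_min (hδ k) (by positivity), fun k => (min_le_right _ _).trans ?_, ?_⟩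
  · exact div_le_self hr₀.le (le_add_of_nonneg_left k.cast_nonneg)
  -- At the first `k` with `r k ≤ ‖x‖`, the bound comes from `‖x‖ < r (k - 1) ≤ δ (k - 1)`.
  · intro x hx
    classical
    have hex := hr_tendsto x hx
    refine ⟨Nat.find hex, Nat.find_spec hex, ?_⟩
    rcases hfind : Nat.find hex with _ | j
    · simpa only [pow_zero, one_mul] using hglob x
    · have hxj : ‖x‖ < r j := not_le.1 (Nat.find_min hex (hfind ▸ j.lt_succ_self))
      exact hp j x (hxj.le.trans (min_le_left _ _))

variable [InnerProductSpace ℝ V] [FiniteDimensional ℝ V]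

theorem exists_hasCmBound_bump_mul_add_nonneg (χ : ContDiffBump (0 : V)) (m : ℕ) :
    ∃ K, ∀ p : V → ℝ, (∀ x, 0 ≤ p x + ‖x‖ ^ m) →
      (∀ ε > 0, ∃ δ > 0, ∀ x, ‖x‖ ≤ δ → 0 ≤ p x + ε * ‖x‖ ^ m) →
      ∃ h : V → ℝ, HasCmBound m K h ∧ (∀ k ≤ m, iteratedFDeriv ℝ k h 0 = 0) ∧
        ∀ x, 0 ≤ χ x * p x + h x := by
  obtain ⟨K, hK⟩ := exists_hasCmBound_shellSum χ m
  refine ⟨K, fun p hglob hloc => ?_⟩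
  obtain ⟨r, hr, hrle, hrp⟩ := exists_scales hglob hloc χ.rIn_pos
  let s : ℕ → ℝ := fun k => r k / χ.rOut
  have hs : ∀ k, 0 < s k := fun k => div_pos (hr k) χ.rOut_pos
  have hsr : ∀ k, s k * χ.rOut = r k := fun k => div_mul_cancel₀ _ χ.rOut_pos.ne'
  have hsχ : ∀ k, s k * χ.rOut ≤ χ.rIn := fun k => (hsr k).trans_le (hrle k)
  have hs1 : ∀ k, s k ≤ 1 := fun k =>
    (div_le_one χ.rOut_pos).2 ((hrle k).trans χ.rIn_lt_rOut.le)
  obtain ⟨hbound, hjet⟩ := hK s hs hs1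
  refine ⟨shellSum χ m s, hbound, hjet, fun x => ?_⟩
  by_cases hx : x = 0
  · subst hx
    exact add_nonneg (mul_nonneg χ.nonneg (nonneg_at_zero_of_locally_nonneg_add_eps hloc))
      (shellSum_nonneg hs hsχ 0)
  obtain ⟨k, hkx, hpk⟩ := hrp x hx
  calc 0 ≤ χ x * (p x + (1 / 2) ^ k * ‖x‖ ^ m) := mul_nonneg χ.nonneg hpk
    _ = χ x * p x + (1 / 2 : ℝ) ^ k • shell χ m (s k) x := by
      rw [shell_of_le (hs k) ((hsr k).trans_le hkx), smul_eq_mul]; ring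
    _ ≤ χ x * p x + shellSum χ m s x := add_le_add_right (smul_shell_le_shellSum hs hsχ k x) _

end Majorant

section PartialDerivatives

variable {m n : ℕ} {F G : Euc n → ℝ} {α : Fin n → ℕ}

lemma foldr_pD_eq_iteratedFDeriv (L : List (Fin n)) (hF : ContDiff ℝ L.length F) (x : Euc n) :
    L.foldr pD F x =
      iteratedFDeriv ℝ L.length F x fun j => EuclideanSpace.single (L.get j) (1 : ℝ) := by
  induction L generalizing x with
  | nil => exact (iteratedFDeriv_zero_apply _).symm
  | cons i L ih =>
    have hdiff : DifferentiableAt ℝ (iteratedFDeriv ℝ L.length F) x :=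
      hF.differentiable_iteratedFDeriv (by exact_mod_cast L.length.lt_succ_self) x
    have hL := funext (ih (hF.of_le (by exact_mod_cast L.length.le_succ)))
    calc (i :: L).foldr pD F x
        = fderiv ℝ (fun y => iteratedFDeriv ℝ L.length F y
            fun j => EuclideanSpace.single (L.get j) (1 : ℝ)) x (EuclideanSpace.single i 1) := by
          rw [List.foldr_cons, hL, pD]
      _ = fderiv ℝ (iteratedFDeriv ℝ L.length F) x (EuclideanSpace.single i 1)
            fun j => EuclideanSpace.single (L.get j) (1 : ℝ) :=
          fderiv_continuousMultilinear_apply_const_apply hdiff _ _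
      _ = iteratedFDeriv ℝ (L.length + 1) F x
            fun j => EuclideanSpace.single ((i :: L).get j) (1 : ℝ) :=
          (iteratedFDeriv_succ_apply_left (n := L.length)
            fun j => EuclideanSpace.single ((i :: L).get j) (1 : ℝ)).symm

/-- The coordinate directions, with multiplicity, along which `mD α` differentiates. -/
def multiIndexList (α : Fin n → ℕ) : List (Fin n) :=
  (List.finRange n).flatMap fun i => List.replicate (α i) i

lemma mD_eq_foldr_multiIndexList (α : Fin n → ℕ) (F : Euc n → ℝ) :
    mD α F = (multiIndexList α).foldr pD F :=
  rfl

lemma length_multiIndexList (α : Fin n → ℕ) : (multiIndexList α).length = deg α := by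
  simp only [multiIndexList, List.length_flatMap, List.length_replicate, deg, Fin.sum_univ_def]

lemma count_multiIndexList (α : Fin n → ℕ) (i : Fin n) : (multiIndexList α).count i = α i := by
  simp only [multiIndexList, List.count_flatMap, Function.comp_def, List.count_replicate,
    ← Fin.sum_univ_def, beq_iff_eq, Finset.sum_ite_eq', Finset.mem_univ, if_true]

lemma toFinsupp_multiIndexList (t : Fin n →₀ ℕ) :
    Multiset.toFinsupp (multiIndexList t : Multiset (Fin n)) = t :=
  Finsupp.ext fun i => by
    rw [Multiset.toFinsupp_apply, Multiset.coe_count, count_multiIndexList]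

lemma abs_mD_le_norm_iteratedFDeriv (hF : ContDiff ℝ (deg α) F) (x : Euc n) :
    |mD α F x| ≤ ‖iteratedFDeriv ℝ (deg α) F x‖ := by
  rw [← length_multiIndexList] at hF ⊢
  rw [mD_eq_foldr_multiIndexList, foldr_pD_eq_iteratedFDeriv _ hF, ← Real.norm_eq_abs]
  refine (ContinuousMultilinearMap.le_opNorm _ _).trans_eq ?_
  simp only [PiLp.norm_single, norm_one, Finset.prod_const_one, mul_one]

lemma mD_congr_of_iteratedFDeriv_eq (hF : ContDiff ℝ (deg α) F) (hG : ContDiff ℝ (deg α) G)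
    {x : Euc n} (h : iteratedFDeriv ℝ (deg α) F x = iteratedFDeriv ℝ (deg α) G x) :
    mD α F x = mD α G x := by
  rw [← length_multiIndexList] at hF hG h
  rw [mD_eq_foldr_multiIndexList, mD_eq_foldr_multiIndexList, foldr_pD_eq_iteratedFDeriv _ hF,
    foldr_pD_eq_iteratedFDeriv _ hG, h]

lemma HasCmBound.cmNormLe {M : ℝ} (hF : HasCmBound m M F) : CmNormLe m n F M :=
  ⟨hF.1, fun _ hα x => (abs_mD_le_norm_iteratedFDeriv (hF.1.of_le (by exact_mod_cast hα)) x).trans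
    (hF.2 _ hα x)⟩

end PartialDerivatives

section Polynomials

open scoped Nat
open MvPolynomial

lemma coeff_foldr_pderiv_mul_prod_factorial {σ R : Type*} [Fintype σ] [DecidableEq σ]
    [CommSemiring R] (L : List σ) (P : MvPolynomial σ R) (t : σ →₀ ℕ) :
    (L.foldr (fun i Q => pderiv i Q) P).coeff t * ∏ i, ((t i)! : R) =
      P.coeff (t + Multiset.toFinsupp (L : Multiset σ)) *
        ∏ i, (((t + Multiset.toFinsupp (L : Multiset σ)) i)! : R) := by
  induction L generalizing t with
  | nil => simp only [List.foldr_nil, Multiset.coe_nil, map_zero, add_zero]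
  | cons i L ih =>
    have hcons : t + Multiset.toFinsupp ((i :: L : List σ) : Multiset σ) =
        t + Finsupp.single i 1 + Multiset.toFinsupp (L : Multiset σ) := by
      rw [← Multiset.cons_coe, ← Multiset.singleton_add, map_add, Multiset.toFinsupp_singleton,
        add_assoc]
    have hfact : (t i + 1 : R) * ∏ j, ((t j)! : R) =
        ∏ j, (((t + Finsupp.single i 1 : σ →₀ ℕ) j)! : R) := by
      have hrest : ∀ j ∈ Finset.univ.erase i,
          (((t + Finsupp.single i 1 : σ →₀ ℕ) j)! : R) = (t j)! := fun j hj => by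
        rw [Finsupp.add_apply, Finsupp.single_eq_of_ne (Finset.ne_of_mem_erase hj), add_zero]
      rw [← Finset.mul_prod_erase _ _ (Finset.mem_univ i),
        ← Finset.mul_prod_erase _ _ (Finset.mem_univ i), Finset.prod_congr rfl hrest,
        Finsupp.add_apply, Finsupp.single_eq_same, Nat.factorial_succ]
      push_cast
      ring
    rw [List.foldr_cons, coeff_pderiv, mul_assoc, hfact, ih, hcons]

variable {m n : ℕ}

lemma contDiff_peval (P : MPoly n) {N : WithTop ℕ∞} : ContDiff ℝ N (peval P) := by
  unfold peval
  induction P using MvPolynomial.induction_on with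
  | C a => simpa only [eval_C] using contDiff_const (c := a)
  | add p q hp hq => simpa only [map_add] using hp.add hq
  | mul_X p i hp => simpa only [map_mul, eval_X] using hp.mul (by fun_prop)

lemma pD_peval (i : Fin n) (P : MPoly n) : pD i (peval P) = peval (pderiv i P) := by
  have hdiff (p : MPoly n) (x : Euc n) : DifferentiableAt ℝ (peval p) x :=
    (contDiff_peval p (N := 1)).differentiable one_ne_zero x
  funext x
  induction P using MvPolynomial.induction_on with
  | C a =>
    have hC : peval (C a : MPoly n) = fun _ => a := funext fun _ => eval_C a
    rw [pD, hC, fderiv_fun_const, pderiv_C, peval, map_zero]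
    rfl
  | add p q hp hq =>
    have hadd (p q : MPoly n) : peval (p + q) = fun x => peval p x + peval q x :=
      funext fun _ => map_add _ p q
    rw [pD] at hp hq ⊢
    rw [hadd, fderiv_fun_add (hdiff p x) (hdiff q x), add_apply, hp, hq, map_add, hadd]
  | mul_X p j hp =>
    have hmul : peval (p * X j) = fun x => peval p x * x j :=
      funext fun x => by rw [peval, map_mul, eval_X, peval]
    have hj : HasFDerivAt (fun x : Euc n => x j) (EuclideanSpace.proj j : Euc n →L[ℝ] ℝ) x :=
      (EuclideanSpace.proj j : Euc n →L[ℝ] ℝ).hasFDerivAt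
    rw [pD] at hp ⊢
    rw [hmul, ((hdiff p x).hasFDerivAt.fun_mul hj).fderiv]
    simp [hp, peval, pderiv_X, Pi.single_apply, apply_ite, eq_comm]

lemma foldr_pD_peval (L : List (Fin n)) (P : MPoly n) :
    L.foldr pD (peval P) = peval (L.foldr (fun i Q => pderiv i Q) P) := by
  induction L with
  | nil => rfl
  | cons i L ih => rw [List.foldr_cons, ih, pD_peval, List.foldr_cons]

lemma peval_zero_right (P : MPoly n) : peval P 0 = P.coeff 0 := by
  rw [← constantCoeff_eq, ← eval_zero]
  rfl

lemma mD_peval_zero (t : Fin n →₀ ℕ) (P : MPoly n) :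
    mD t (peval P) 0 = P.coeff t * ∏ i, ((t i)! : ℝ) := by
  have h := coeff_foldr_pderiv_mul_prod_factorial (multiIndexList t) P 0
  simp only [zero_add, toFinsupp_multiIndexList, Finsupp.zero_apply, Nat.factorial_zero,
    Nat.cast_one, Finset.prod_const_one, mul_one] at h
  rw [mD_eq_foldr_multiIndexList, foldr_pD_peval, peval_zero_right, h]

lemma deg_eq_finsuppSum (t : Fin n →₀ ℕ) : deg t = t.sum fun _ e => e :=
  (t.sum_fintype (fun _ e => e) fun _ => rfl).symm

lemma abs_coeff_le_one {P : MPoly n} (hP : P.totalDegree ≤ m)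
    (hder : ∀ β : Fin n → ℕ, deg β ≤ m → |mD β (peval P) 0| ≤ 1) (t : Fin n →₀ ℕ) :
    |P.coeff t| ≤ 1 := by
  by_cases ht : t ∈ P.support
  · have hdeg : deg t ≤ m := (deg_eq_finsuppSum t).trans_le ((le_totalDegree ht).trans hP)
    have hfact : (1 : ℝ) ≤ ∏ i, ((t i)! : ℝ) :=
      Finset.one_le_prod fun i _ => by exact_mod_cast (t i).factorial_pos
    have hprod := hder t hdeg
    rw [mD_peval_zero, abs_mul, abs_of_nonneg (zero_le_one.trans hfact)] at hprod
    exact (le_mul_of_one_le_right (abs_nonneg _) hfact).trans hprod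
  · rw [notMem_support_iff.1 ht, abs_zero]
    exact zero_le_one

lemma coeff_truncLE (d : ℕ) (P : MPoly n) (t : Fin n →₀ ℕ) :
    (truncLE d P).coeff t = if deg t ≤ d then P.coeff t else 0 := by
  classical
  simp only [truncLE, coeff_sum, coeff_monomial, Finset.sum_ite_eq', Finset.mem_filter,
    mem_support_iff, deg_eq_finsuppSum]
  grind

lemma totalDegree_truncLE_le (d : ℕ) (P : MPoly n) : (truncLE d P).totalDegree ≤ d := by
  refine Finset.sup_le fun t ht => ?_
  rw [mem_support_iff, coeff_truncLE, ite_ne_right_iff] at ht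
  exact (deg_eq_finsuppSum t).symm.trans_le ht.1

lemma isJetAt_truncLE {F : Euc n → ℝ} {P : MPoly n} (h : IsJetPlusAt m n F 0 P) :
    IsJetAt m n F 0 (truncLE (m - 1) P) := by
  refine ⟨totalDegree_truncLE_le _ _, fun α hα => ?_⟩
  rw [← h.2 α (hα.trans (m.sub_le 1)), ← Finsupp.coe_equivFunOnFinite_symm α, mD_peval_zero,
    mD_peval_zero, coeff_truncLE, if_pos]
  rwa [Finsupp.coe_equivFunOnFinite_symm]

lemma peval_eq_sum {S : Finset (Fin n →₀ ℕ)} {P : MPoly n} (hS : P.support ⊆ S) (x : Euc n) :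
    peval P x = ∑ t ∈ S, P.coeff t * ∏ i, x i ^ t i := by
  rw [peval, eval_eq']
  refine Finset.sum_subset hS fun t _ ht => ?_
  rw [notMem_support_iff.1 ht, zero_mul]

lemma exists_hasCmBound_mul_peval {χ : Euc n → ℝ} (hχ : HasCompactSupport χ)
    (hχ' : ContDiff ℝ m χ) (d : ℕ) :
    ∃ K, ∀ P : MPoly n, P.totalDegree ≤ d → (∀ t, |P.coeff t| ≤ 1) →
      HasCmBound m K fun x => χ x * peval P x := by
  have hmono (t : Fin n →₀ ℕ) : ∃ M, HasCmBound m M fun x : Euc n => χ x * ∏ i, x i ^ t i :=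
    exists_hasCmBound_of_hasCompactSupport hχ.mul_right (hχ'.mul (by fun_prop))
  choose M hM using hmono
  let S : Finset (Fin n →₀ ℕ) := (Finsupp.finite_of_degree_le d).toFinset
  refine ⟨∑ t ∈ S, M t, fun P hP hcoeff => ?_⟩
  have hS : P.support ⊆ S := fun t ht =>
    (Set.Finite.mem_toFinset _).2 ((le_totalDegree ht).trans hP)
  have hexpand : (fun x => χ x * peval P x) =
      fun x => ∑ t ∈ S, P.coeff t • (χ x * ∏ i, x i ^ t i) := by
    funext x
    simp only [peval_eq_sum hS, Finset.mul_sum, smul_eq_mul, mul_left_comm]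
  rw [hexpand]
  exact .sum fun t _ => ((hM t).const_smul _).mono
    (mul_le_of_le_one_left (hM t).nonneg (hcoeff t))

end Polynomials

theorem GammaTilde0_has_nonneg_extension_general (m n : ℕ) :
    ∃ C : ℝ, 0 < C ∧ ∀ P ∈ Gamma0plus m n,
      ∃ F : Euc n → ℝ, CmNormLe m n F C ∧ (∀ y, 0 ≤ F y) ∧ IsJetPlusAt m n F 0 P := by
  let χ : ContDiffBump (0 : Euc n) := default
  obtain ⟨K₁, hcutoff⟩ := exists_hasCmBound_mul_peval χ.hasCompactSupport (χ.contDiff (n := m)) m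
  obtain ⟨K₂, hmajorant⟩ := exists_hasCmBound_bump_mul_add_nonneg χ m
  refine ⟨max (K₁ + K₂) 1, lt_max_of_lt_right one_pos, fun P ⟨hdeg, hder, hglob, hloc⟩ => ?_⟩
  have hχP := hcutoff P hdeg (abs_coeff_le_one hdeg hder)
  obtain ⟨h, hh, hjet, hnonneg⟩ := hmajorant (peval P) hglob hloc
  have hF := hχP.add hh
  refine ⟨_, (hF.mono (le_max_left _ _)).cmNormLe, hnonneg, hdeg, fun α hα => ?_⟩
  refine mD_congr_of_iteratedFDeriv_eq (contDiff_peval P)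
    (hF.1.of_le (by exact_mod_cast hα)) ?_
  have hχ : (fun x => χ x * peval P x) =ᶠ[nhds 0] peval P := by
    filter_upwards [χ.eventuallyEq_one] with x hx
    rw [hx, Pi.one_apply, one_mul]
  rw [fun_iteratedFDeriv_add_apply (hχP.contDiffAt hα 0) (hh.contDiffAt hα 0), hjet _ hα,
    add_zero, (hχ.iteratedFDeriv ℝ (deg α)).eq_of_nhds]

/-- **(B')**: every `P ∈ Γ̃₀ = π Γ₀⁺` is the `(m-1)`-jet at `0` of a nonnegative `C^m`
function of controlled norm. -/
theorem GammaTilde0_has_nonneg_extension (m n : ℕ) (hm : 0 < m) (hn : 0 < n) :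
    ∃ C : ℝ, 0 < C ∧
      ∀ Pj : MPoly n, (∃ P ∈ Gamma0plus m n, truncLE (m - 1) P = Pj) →
        ∃ F : Euc n → ℝ, CmNormLe m n F C ∧ (∀ y, 0 ≤ F y) ∧ IsJetAt m n F 0 Pj := by
  obtain ⟨C, hC, hext⟩ := GammaTilde0_has_nonneg_extension_general m n
  refine ⟨C, hC, fun _ ⟨P, hP, hPj⟩ => ?_⟩
  exact (hext P hP).imp fun F ⟨hF, hpos, hjet⟩ => ⟨hF, hpos, hPj ▸ isJetAt_truncLE hjet⟩

end
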